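/- For a positive integer k, real numbers x, y, and an integer m, the torus coherent state is ξ^k_{(x,y)}(m) = (2/k)^(1/4) · e^{i k x y/(4π)} · ∑_{p ∈ ℤ} exp(−(k/(4π))·(2πm/k − 2πp − x)²) · exp(i·(k/(2π))·y·(2πm/k − 2πp − x)); the series converges absolutely. Then for all integers m, m′: (k/(4π²)) · ∫₀^{2π} ∫₀^{2π} ξ^k_{(x,y)}(m) · conj(ξ^k_{(x,y)}(m′)) dx dy = 1 if k divides m − m′, and = 0 otherwise. -/

import Mathlib

open Real

/-- The `p`-th term of the periodized-Gaussian series defining the torus coherent state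
`ξ^k_{(x,y)}(m)`. -/
noncomputable def xiTerm (k : ℕ) (x y : ℝ) (m : ℤ) (p : ℤ) : ℂ :=
  ((Real.exp (-((k : ℝ) / (4 * π)) * (2 * π * (m : ℝ) / (k : ℝ) - 2 * π * (p : ℝ) - x) ^ 2) : ℝ) : ℂ) *
    Complex.exp (Complex.I *
      ((((k : ℝ) / (2 * π)) * y * (2 * π * (m : ℝ) / (k : ℝ) - 2 * π * (p : ℝ) - x) : ℝ) : ℂ))

/-- The torus coherent state
`ξ^k_{(x,y)}(m) = (2/k)^(1/4) · e^{ikxy/(4π)} · ∑_{p∈ℤ} e^{−(k/(4π))(2πm/k − 2πp − x)²}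
· e^{i(k/(2π))y(2πm/k − 2πp − x)}`. -/
noncomputable def xi (k : ℕ) (x y : ℝ) (m : ℤ) : ℂ :=
  (((2 / (k : ℝ)) ^ ((1 : ℝ) / 4) : ℝ) : ℂ) *
    Complex.exp (Complex.I * (((k : ℝ) * x * y / (4 * π) : ℝ) : ℂ)) *
    ∑' p : ℤ, xiTerm k x y m p

/-!
Up to a unimodular phase, `ξ^k_{(x,y)}(m)` is a trigonometric series in `y` whose frequencies are
the integers `m - k p`, with Gaussian amplitudes depending only on `x`. By Parseval's identity in
`y`, the states of different residues mod `k` are orthogonal, while two states of the same residue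
coincide and contribute the periodization in `x` of a squared Gaussian. Integrating this
periodization over a period unfolds to a Gaussian integral over `ℝ`.
-/

open MeasureTheory
open scoped ComplexConjugate

section Periodization

variable {E : Type*} [NormedAddCommGroup E] [NormedSpace ℝ E] {f : ℝ → E}

lemma integral_tsum_comp_add_int (hf : Integrable f) :
    ∫ x in (0 : ℝ)..1, ∑' n : ℤ, f (x + n) = ∫ x, f x := by
  have hnorm := hf.norm.hasSum_intervalIntegral_comp_add_int.summable
  have hsum := hf.hasSum_intervalIntegral_comp_add_int
  simp only [intervalIntegral.integral_of_le zero_le_one] at hnorm hsum ⊢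
  exact (hasSum_integral_of_summable_integral_norm
    (fun n : ℤ => (hf.comp_add_right (n : ℝ)).integrableOn) hnorm).unique hsum

lemma integral_tsum_comp_add_int_mul (hf : Integrable f) {T : ℝ} (hT : 0 < T) :
    ∫ x in (0 : ℝ)..T, ∑' n : ℤ, f (x + n * T) = ∫ x, f x :=
  calc ∫ x in (0 : ℝ)..T, ∑' n : ℤ, f (x + n * T)
      = T • ∫ t in (0 : ℝ)..1, ∑' n : ℤ, f (T * t + n * T) := by
        rw [intervalIntegral.smul_integral_comp_mul_left (fun x => ∑' n : ℤ, f (x + n * T)),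
          mul_zero, mul_one]
    _ = T • ∫ t in (0 : ℝ)..1, ∑' n : ℤ, f (T * (t + n)) := by
        simp only [mul_add, mul_comm T (Int.cast _)]
    _ = T • ∫ t, f (T * t) := by
        rw [integral_tsum_comp_add_int (hf.comp_mul_left' hT.ne')]
    _ = ∫ x, f x := by
        rw [Measure.integral_comp_mul_left, abs_of_pos (inv_pos.2 hT), smul_inv_smul₀ hT.ne']

end Periodization

lemma summable_exp_neg_mul_sub_int_mul_sq {b T : ℝ} (hb : 0 < b) (hT : T ≠ 0) (c : ℝ) :
    Summable fun p : ℤ => Real.exp (-b * (c - p * T) ^ 2) := by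
  have htheta := (summable_jacobiTheta₂_term_iff
    (⟨0, -(b * c * T / π)⟩ : ℂ) ⟨0, b * T ^ 2 / π⟩).2 (by positivity)
  refine (htheta.norm.mul_left (Real.exp (-b * c ^ 2))).congr fun p => ?_
  rw [norm_jacobiTheta₂_term, ← Real.exp_add]
  congr 1
  field_simp
  ring

lemma integral_tsum_exp_neg_mul_sub_int_mul_sq {b T : ℝ} (hb : 0 < b) (hT : 0 < T) (c : ℝ) :
    ∫ x in (0 : ℝ)..T, ∑' p : ℤ, Real.exp (-b * (c - p * T - x) ^ 2) = √(π / b) := by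
  have hint : Integrable fun x => Real.exp (-b * (c - x) ^ 2) :=
    (integrable_exp_neg_mul_sq hb).comp_sub_left c
  calc ∫ x in (0 : ℝ)..T, ∑' p : ℤ, Real.exp (-b * (c - p * T - x) ^ 2)
      = ∫ x in (0 : ℝ)..T, ∑' p : ℤ, Real.exp (-b * (c - (x + p * T)) ^ 2) := by
        simp only [sub_sub, add_comm]
    _ = ∫ x, Real.exp (-b * (c - x) ^ 2) := integral_tsum_comp_add_int_mul hint hT
    _ = √(π / b) := by
        rw [integral_sub_left_eq_self (fun u => Real.exp (-b * u ^ 2)), integral_gaussian]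

section TrigSeries

variable {ι κ : Type*} {a : ι → ℂ} {b : κ → ℂ}

lemma norm_exp_int_mul_ofReal_mul_I (n : ℤ) (y : ℝ) : ‖Complex.exp (n * y * Complex.I)‖ = 1 := by
  simpa using Complex.norm_exp_ofReal_mul_I (n * y)

lemma integral_exp_int_mul_ofReal_mul_I (n : ℤ) :
    ∫ y in (0 : ℝ)..(2 * π), Complex.exp (n * y * Complex.I) = if n = 0 then 2 * π else 0 := by
  split_ifs with hn
  · simp [hn]
  · have hperiod : Complex.exp (n * Complex.I * (2 * π : ℝ)) = 1 := by
      rw [← Complex.exp_int_mul_two_pi_mul_I n]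
      push_cast
      ring_nf
    simp_rw [mul_right_comm _ _ Complex.I]
    rw [integral_exp_mul_complex (by simp [hn]), hperiod]
    simp

/-- The trigonometric series in `y` with integer frequencies `ω i` and coefficients `a i`. The
frequencies are a family rather than all of `ℤ`, so that series supported on a residue class can be
indexed without a support condition. -/
noncomputable def trigSeries (ω : ι → ℤ) (a : ι → ℂ) (y : ℝ) : ℂ :=
  ∑' i, a i * Complex.exp (ω i * y * Complex.I)

lemma hasSum_trigSeries (ω : ι → ℤ) (ha : Summable fun i => ‖a i‖) (y : ℝ) :
    HasSum (fun i => a i * Complex.exp (ω i * y * Complex.I)) (trigSeries ω a y) :=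
  (ha.of_norm_bounded fun i => by simp [norm_exp_int_mul_ofReal_mul_I]).hasSum

lemma continuous_trigSeries (ω : ι → ℤ) (ha : Summable fun i => ‖a i‖) :
    Continuous (trigSeries ω a) :=
  continuous_tsum (fun i => by fun_prop) ha fun i y => by simp [norm_exp_int_mul_ofReal_mul_I]

lemma conj_trigSeries (ω : ι → ℤ) (a : ι → ℂ) (y : ℝ) :
    conj (trigSeries ω a y) = trigSeries (-ω) (fun i => conj (a i)) y := by
  simp [trigSeries, Complex.conj_tsum, ← Complex.exp_conj]

lemma integral_trigSeries_mul [Countable ι] (ω : ι → ℤ) (ha : Summable fun i => ‖a i‖)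
    {h : ℝ → ℂ} {s t : ℝ} (hh : IntervalIntegrable h volume s t) :
    ∫ y in s..t, trigSeries ω a y * h y =
      ∑' i, a i * ∫ y in s..t, Complex.exp (ω i * y * Complex.I) * h y := by
  have hsum := intervalIntegral.hasSum_integral_of_dominated_convergence (μ := volume)
    (F := fun i y => a i * Complex.exp (ω i * y * Complex.I) * h y) (fun i y => ‖a i‖ * ‖h y‖)
    (fun i => (Continuous.aestronglyMeasurable (by fun_prop)).mul hh.def'.aestronglyMeasurable)
    (fun i => .of_forall fun y _ => by simp [norm_exp_int_mul_ofReal_mul_I])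
    (.of_forall fun y _ => ha.mul_right ‖h y‖)
    (by simpa only [tsum_mul_right] using hh.norm.const_mul (∑' i, ‖a i‖))
    (.of_forall fun y _ => (hasSum_trigSeries ω ha y).mul_right (h y))
  simp only [← hsum.tsum_eq, mul_assoc, intervalIntegral.integral_const_mul]

lemma integral_trigSeries_mul_exp [Countable ι] (ω : ι → ℤ) (ha : Summable fun i => ‖a i‖)
    (n : ℤ) :
    ∫ y in (0 : ℝ)..(2 * π), trigSeries ω a y * Complex.exp (n * y * Complex.I) =
      ∑' i, a i * if ω i + n = 0 then 2 * π else 0 := by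
  rw [integral_trigSeries_mul ω ha (Continuous.intervalIntegrable (by fun_prop) _ _)]
  simp_rw [← Complex.exp_add, ← add_mul, ← Int.cast_add, integral_exp_int_mul_ofReal_mul_I]

theorem integral_trigSeries_mul_conj_trigSeries [Countable ι] [Countable κ]
    (ω : ι → ℤ) (ν : κ → ℤ) (ha : Summable fun i => ‖a i‖) (hb : Summable fun j => ‖b j‖) :
    ∫ y in (0 : ℝ)..(2 * π), trigSeries ω a y * conj (trigSeries ν b y) =
      ∑' i, a i * ∑' j, conj (b j) * if ω i = ν j then 2 * π else 0 := by
  have hb' : Summable fun j => ‖conj (b j)‖ := by simpa only [RCLike.norm_conj] using hb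
  simp_rw [conj_trigSeries]
  rw [integral_trigSeries_mul ω ha ((continuous_trigSeries (-ν) hb').intervalIntegrable _ _)]
  simp_rw [mul_comm (Complex.exp _), integral_trigSeries_mul_exp (-ν) hb', Pi.neg_apply,
    neg_add_eq_zero, eq_comm]

theorem integral_trigSeries_mul_conj_trigSeries_of_disjoint [Countable ι] [Countable κ]
    {ω : ι → ℤ} {ν : κ → ℤ} (h : ∀ i j, ω i ≠ ν j) (ha : Summable fun i => ‖a i‖)
    (hb : Summable fun j => ‖b j‖) :
    ∫ y in (0 : ℝ)..(2 * π), trigSeries ω a y * conj (trigSeries ν b y) = 0 := by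
  simp [integral_trigSeries_mul_conj_trigSeries ω ν ha hb, h]

theorem integral_trigSeries_mul_conj_self [Countable ι] {ω : ι → ℤ} (hω : ω.Injective)
    (ha : Summable fun i => ‖a i‖) :
    ∫ y in (0 : ℝ)..(2 * π), trigSeries ω a y * conj (trigSeries ω a y) =
      ((2 * π * ∑' i, ‖a i‖ ^ 2 : ℝ) : ℂ) := by
  have hdiag (i : ι) : a i * ∑' j, conj (a j) * (if ω i = ω j then 2 * π else 0 : ℝ) =
      2 * π * ‖a i‖ ^ 2 := by
    rw [tsum_eq_single i fun j hj => by simp [hω.ne hj.symm], if_pos rfl, ← mul_assoc,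
      Complex.mul_conj', mul_comm]
    push_cast
    rfl
  rw [integral_trigSeries_mul_conj_trigSeries ω ω ha ha]
  simp_rw [hdiag, tsum_mul_left]
  push_cast
  rfl

end TrigSeries

/-- The modulus of the `p`-th term of the series for `ξ^k_{(x,y)}(m)`; it does not depend
on `y`. -/
noncomputable def xiAmplitude (k : ℕ) (x : ℝ) (m p : ℤ) : ℝ :=
  Real.exp (-((k : ℝ) / (4 * π)) * (2 * π * m / k - 2 * π * p - x) ^ 2)

section Xi

variable {k : ℕ}

lemma norm_xiTerm (k : ℕ) (x y : ℝ) (m p : ℤ) : ‖xiTerm k x y m p‖ = xiAmplitude k x m p := by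
  rw [xiTerm, norm_mul, mul_comm Complex.I, Complex.norm_exp_ofReal_mul_I, mul_one,
    Complex.norm_of_nonneg (Real.exp_pos _).le, xiAmplitude]

lemma summable_xiAmplitude (hk : 0 < k) (x : ℝ) (m : ℤ) : Summable (xiAmplitude k x m) := by
  refine (summable_exp_neg_mul_sub_int_mul_sq (b := k / (4 * π)) (by positivity) two_pi_pos.ne'
    (2 * π * m / k - x)).congr fun p => ?_
  rw [xiAmplitude]
  ring_nf

lemma summable_norm_ofReal_xiAmplitude (hk : 0 < k) (x : ℝ) (m : ℤ) :
    Summable fun p => ‖(xiAmplitude k x m p : ℂ)‖ := by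
  simpa only [Complex.norm_real] using (summable_xiAmplitude hk x m).norm

lemma integral_tsum_xiAmplitude_sq (hk : 0 < k) (m : ℤ) :
    ∫ x in (0 : ℝ)..(2 * π), ∑' p : ℤ, xiAmplitude k x m p ^ 2 = √(2 / k) * π := by
  have hsq (x : ℝ) (p : ℤ) : xiAmplitude k x m p ^ 2 =
      Real.exp (-(k / (2 * π)) * (2 * π * m / k - p * (2 * π) - x) ^ 2) := by
    rw [xiAmplitude, ← Real.exp_nat_mul]
    ring_nf
  simp_rw [hsq]
  rw [integral_tsum_exp_neg_mul_sub_int_mul_sq (by positivity) two_pi_pos,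
    show π / (k / (2 * π)) = 2 / k * π ^ 2 by field_simp, Real.sqrt_mul (by positivity),
    Real.sqrt_sq pi_pos.le]

lemma xiTerm_add_natCast_mul (hk : 0 < k) (x y : ℝ) (m d p : ℤ) :
    xiTerm k x y (m + k * d) (p + d) = xiTerm k x y m p := by
  have hcentre : 2 * π * (m + k * d : ℤ) / k - 2 * π * (p + d : ℤ) - x =
      2 * π * m / k - 2 * π * p - x := by
    push_cast
    field_simp
    ring
  rw [xiTerm, xiTerm, hcentre]

lemma xi_eq_of_dvd_sub (hk : 0 < k) (x y : ℝ) {m m' : ℤ} (h : (k : ℤ) ∣ m - m') :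
    xi k x y m = xi k x y m' := by
  obtain ⟨d, hd⟩ := h
  obtain rfl : m = m' + k * d := by linarith
  rw [xi, xi, ← (Equiv.addRight d).tsum_eq]
  simp only [Equiv.coe_addRight, xiTerm_add_natCast_mul hk]

lemma xiTerm_eq_exp_mul (hk : 0 < k) (x y : ℝ) (m p : ℤ) :
    xiTerm k x y m p = Complex.exp (-(k * x * y / (2 * π) : ℝ) * Complex.I) *
      (xiAmplitude k x m p * Complex.exp ((m - k * p : ℤ) * y * Complex.I)) := by
  have hk' : (k : ℂ) ≠ 0 := Nat.cast_ne_zero.2 hk.ne'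
  have hπ : (π : ℂ) ≠ 0 := Complex.ofReal_ne_zero.2 pi_ne_zero
  rw [mul_left_comm, ← Complex.exp_add, xiTerm, xiAmplitude]
  congr 2
  push_cast
  field_simp
  ring

/-- The torus coherent state `ξ^k_{(x,y)}(m)` stripped of its normalization and phase: the
trigonometric series in `y` with Gaussian coefficients and frequencies `m - k p`. -/
noncomputable def xiSeries (k : ℕ) (x : ℝ) (m : ℤ) : ℝ → ℂ :=
  trigSeries (fun p : ℤ => m - k * p) (fun p => (xiAmplitude k x m p : ℂ))

lemma xi_eq_exp_mul_xiSeries (hk : 0 < k) (x y : ℝ) (m : ℤ) :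
    xi k x y m = ((2 / k : ℝ) ^ (1 / 4 : ℝ) : ℝ) *
      Complex.exp ((-(k * x * y / (4 * π)) : ℝ) * Complex.I) * xiSeries k x m y := by
  simp_rw [xi, xiTerm_eq_exp_mul hk, tsum_mul_left]
  rw [← mul_assoc, mul_assoc _ (Complex.exp _) (Complex.exp _), ← Complex.exp_add, xiSeries,
    trigSeries]
  congr 3
  push_cast
  ring

lemma xi_mul_conj_xi (hk : 0 < k) (x y : ℝ) (m m' : ℤ) :
    xi k x y m * conj (xi k x y m') =
      √(2 / k : ℝ) * (xiSeries k x m y * conj (xiSeries k x m' y)) := by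
  have hnorm : ((2 / k : ℝ) ^ (1 / 4 : ℝ)) ^ 2 = √(2 / k : ℝ) := by
    rw [← Real.rpow_mul_natCast (by positivity), Real.sqrt_eq_rpow]
    norm_num
  rw [xi_eq_exp_mul_xiSeries hk, xi_eq_exp_mul_xiSeries hk, map_mul, mul_mul_mul_comm,
    Complex.mul_conj', norm_mul, Complex.norm_exp_ofReal_mul_I, mul_one,
    Complex.norm_of_nonneg (by positivity), ← Complex.ofReal_pow, hnorm]

lemma integral_xi_mul_conj_xi_of_not_dvd (hk : 0 < k) (x : ℝ) {m m' : ℤ}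
    (h : ¬ (k : ℤ) ∣ m - m') :
    ∫ y in (0 : ℝ)..(2 * π), xi k x y m * conj (xi k x y m') = 0 := by
  have hdisjoint (p q : ℤ) : m - k * p ≠ m' - k * q := fun heq => h ⟨p - q, by linarith⟩
  simp_rw [xi_mul_conj_xi hk, intervalIntegral.integral_const_mul, xiSeries]
  rw [integral_trigSeries_mul_conj_trigSeries_of_disjoint hdisjoint
    (summable_norm_ofReal_xiAmplitude hk x m) (summable_norm_ofReal_xiAmplitude hk x m'), mul_zero]

lemma integral_xi_mul_conj_self (hk : 0 < k) (x : ℝ) (m : ℤ) :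
    ∫ y in (0 : ℝ)..(2 * π), xi k x y m * conj (xi k x y m) =
      ((√(2 / k) * (2 * π * ∑' p, xiAmplitude k x m p ^ 2) : ℝ) : ℂ) := by
  have hinj : Function.Injective fun p : ℤ => m - k * p :=
    sub_right_injective.comp (mul_right_injective₀ (Nat.cast_ne_zero.2 hk.ne'))
  simp_rw [xi_mul_conj_xi hk, intervalIntegral.integral_const_mul, xiSeries]
  rw [integral_trigSeries_mul_conj_self hinj (summable_norm_ofReal_xiAmplitude hk x m)]
  simp_rw [Complex.norm_real, Real.norm_eq_abs, sq_abs, ← Complex.ofReal_mul]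

lemma integral_integral_xi_mul_conj_self (hk : 0 < k) (m : ℤ) :
    ∫ x in (0 : ℝ)..(2 * π), ∫ y in (0 : ℝ)..(2 * π), xi k x y m * conj (xi k x y m) =
      ((4 * π ^ 2 / k : ℝ) : ℂ) := by
  simp_rw [integral_xi_mul_conj_self hk, intervalIntegral.integral_ofReal,
    intervalIntegral.integral_const_mul, integral_tsum_xiAmplitude_sq hk]
  congr 1
  calc √(2 / k : ℝ) * (2 * π * (√(2 / k) * π))
      = √(2 / k : ℝ) ^ 2 * (2 * π ^ 2) := by ring
    _ = 4 * π ^ 2 / k := by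
        rw [Real.sq_sqrt (by positivity)]
        ring

end Xi

/-- The series defining `ξ^k_{(x,y)}(m)` converges absolutely, and the torus coherent states
satisfy the over-completeness relation
`(k/(4π²)) ∫₀^{2π} ∫₀^{2π} ξ^k_{(x,y)}(m)·conj(ξ^k_{(x,y)}(m′)) dx dy = δ_{k ∣ m−m′}`. -/
theorem xi_overcompleteness (k : ℕ) (hk : 0 < k) (m m' : ℤ) :
    (∀ (x y : ℝ) (m₀ : ℤ), Summable fun p : ℤ => ‖xiTerm k x y m₀ p‖) ∧
    ((k : ℂ) / (4 * (π : ℂ) ^ 2)) *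
        (∫ x in (0 : ℝ)..(2 * π), ∫ y in (0 : ℝ)..(2 * π),
          xi k x y m * (starRingEnd ℂ) (xi k x y m')) =
      (if (k : ℤ) ∣ (m - m') then 1 else 0) := by
  refine ⟨fun x y m₀ => ?_, ?_⟩
  · simpa only [norm_xiTerm] using summable_xiAmplitude hk x m₀
  split_ifs with h
  · have hk' : (k : ℂ) ≠ 0 := Nat.cast_ne_zero.2 hk.ne'
    have hπ : (π : ℂ) ≠ 0 := Complex.ofReal_ne_zero.2 pi_ne_zero
    simp_rw [xi_eq_of_dvd_sub hk _ _ h, integral_integral_xi_mul_conj_self hk]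
    push_cast
    field_simp
  · simp [integral_xi_mul_conj_xi_of_not_dvd hk _ h]
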